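/- Let G be a finite simple graph, let Q be a MultiSLP equivalent to P_G, and let 𝔊 be the graph on the constants of Q built from the freely appearing constants and freely appearing goal variables of Q. If a goal variable g_{xy} of Q is defined by a statement g_{xy} ← v_1 ⊕ v_2 in which both arguments v_1 and v_2 are temporal variables, then x ⇌ y in 𝔊. -/

import Mathlib

/-- Terms of a MultiSLP over a set of constants `C`:
either a constant, or a variable referenced by its statement index. -/
inductive Term (C : Type) where
  | const : C → Term C
  | var : ℕ → Term C
  deriving DecidableEq

/-- A MultiSLP over the constants `C`: a sequence of statements
`v_i ← ⊕(t_{i,1},…,t_{i,n_i})` (statement `i` defines variable `i`, each `n_i ≥ 2`,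
and every variable used in statement `i` has index `< i`), followed by a return
list of terms whose variables are all defined. -/
structure MultiSLP (C : Type) where
  stmts : List (List (Term C))
  ret : List (Term C)
  arity : ∀ args ∈ stmts, 2 ≤ args.length
  wfStmts : ∀ i, i < stmts.length → ∀ t ∈ stmts.getD i [], ∀ j, t = Term.var j → j < i
  wfRet : ∀ t ∈ ret, ∀ j, t = Term.var j → j < stmts.length

/-- The value of a constant `c` is the standard basis vector `e_c` of `GF(2)^C`. -/
def eConst {C : Type} [DecidableEq C] (c : C) : C → ZMod 2 := fun d => if d = c then 1 else 0

/-- Value of a term, given the list of values of the previously defined variables. -/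
def Term.eval {C : Type} [DecidableEq C] (env : List (C → ZMod 2)) : Term C → (C → ZMod 2)
  | .const c => eConst c
  | .var j => env.getD j 0

/-- Values of the variables of a MultiSLP: the value of variable `i` is the GF(2)-sum
(XOR) of the values of the arguments of statement `i`. -/
def MultiSLP.envList {C : Type} [DecidableEq C] (P : MultiSLP C) : List (C → ZMod 2) :=
  P.stmts.foldl (fun env args => env ++ [(args.map (Term.eval env)).sum]) []

/-- The result of a MultiSLP: the tuple of values of its returned terms. -/
def MultiSLP.result {C : Type} [DecidableEq C] (P : MultiSLP C) : List (C → ZMod 2) :=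
  P.ret.map (Term.eval P.envList)

/-- The value of variable `i` of a MultiSLP. -/
def MultiSLP.value {C : Type} [DecidableEq C] (P : MultiSLP C) (i : ℕ) : C → ZMod 2 :=
  P.envList.getD i 0

/-- The memory-access cost `#_M(P) = Σ_i (n_i + 1)`. -/
def MultiSLP.costM {C : Type} (P : MultiSLP C) : ℕ :=
  (P.stmts.map fun args => args.length + 1).sum
/-- The constants used by `P_G`: the fresh constant `ρ`, the nodes of `G`,
and for each node `a` the fresh local nodes `λ_a` and `μ_a`. -/
inductive Const (N : Type) where
  | rho : Const N
  | node : N → Const N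
  | lam : N → Const N
  | mu : N → Const N
  deriving DecidableEq

/-- The result of `P_G`: the family of values `e_ρ + e_x + e_y` indexed by the
edges of `G_modif` (first the edges of `G`, enumerated by the list `L`, then for
each node `a` — enumerated by `nodes` — the two local edges `(a,λ_a)` and `(a,μ_a)`).
A MultiSLP `Q` is equivalent to `P_G` iff `Q.result = targetValues L nodes`. -/
def targetValues {N : Type} [DecidableEq N] (L : List (N × N)) (nodes : List N) :
    List (Const N → ZMod 2) :=
  (L.map fun p =>
    eConst Const.rho + eConst (Const.node p.1) + eConst (Const.node p.2))
  ++ nodes.flatMap fun a =>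
      [eConst Const.rho + eConst (Const.node a) + eConst (Const.lam a),
       eConst Const.rho + eConst (Const.node a) + eConst (Const.mu a)]

/-- A constant `c` *freely appears* in `Q` if it occurs as an argument of the defining
statement of some temporal (non-returned) variable of `Q`. -/
def FreeConst {C : Type} (Q : MultiSLP C) (c : C) : Prop :=
  ∃ k, k < Q.stmts.length ∧ Term.var k ∉ Q.ret ∧ Term.const c ∈ Q.stmts.getD k []

/-- A goal variable `g_{xy}` (a returned variable with value `e_ρ + e_x + e_y`)
*freely appears* in `Q` if it occurs as an argument of the defining statement of some
temporal (non-returned) variable of `Q`. -/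
def FreeGoalEdge {N : Type} [DecidableEq N] (Q : MultiSLP (Const N)) (x y : Const N) :
    Prop :=
  ∃ i, i < Q.stmts.length ∧ Term.var i ∈ Q.ret ∧
    Q.value i = eConst Const.rho + eConst x + eConst y ∧
    ∃ k, k < Q.stmts.length ∧ Term.var k ∉ Q.ret ∧ Term.var i ∈ Q.stmts.getD k []

/-- The edge relation of the graph `𝔊` on the constants of `Q`: every pair of distinct
freely appearing constants is joined, and for every freely appearing goal variable
`g_{xy}` the constants `x` and `y` are joined. -/
def GGAdj {N : Type} [DecidableEq N] (Q : MultiSLP (Const N)) (c d : Const N) : Prop :=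
  c ≠ d ∧ ((FreeConst Q c ∧ FreeConst Q d) ∨ FreeGoalEdge Q c d ∨ FreeGoalEdge Q d c)

/-- `x ⇌ y`: the constants `x` and `y` are joined by a path in `𝔊`. -/
def GGConn {N : Type} [DecidableEq N] (Q : MultiSLP (Const N)) (x y : Const N) : Prop :=
  Relation.ReflTransGen (GGAdj Q) x y

/-- `c ∈ 𝔊_⋆`: `c` lies in the connected component of `𝔊` containing the freely
appearing constants. -/
def InStar {N : Type} [DecidableEq N] (Q : MultiSLP (Const N)) (c : Const N) : Prop :=
  ∃ c₀, FreeConst Q c₀ ∧ GGConn Q c₀ c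

/- Sort the constants by their connected components in `𝔊`, and let `φ` be the linear functional on
`GF(2)^C` sending `e_c` to `1` exactly when `c ≠ ρ` lies in the component of `x`. A freely appearing
goal variable `g_{ab}` has `a` and `b` in the same component, so `φ` vanishes on it. If no constant
in the component of `x` freely appears, then `φ` vanishes on all temporal variables, hence on
`g_{xy}`, which is a sum of such; but `φ (e_ρ + e_x + e_y) = 0` forces `y` into the component
of `x`. So either `x ⇌ y` or `x ∈ 𝔊_⋆`, and symmetrically for `y`; as `𝔊_⋆` is connected, `x ⇌ y`
in every case. -/

theorem exists_linearMap_apply_eq_of_linearIndependent {ι K V W : Type*} [DivisionRing K]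
    [AddCommGroup V] [Module K V] [AddCommGroup W] [Module K W] {v : ι → V}
    (hv : LinearIndependent K v) (f : ι → W) : ∃ φ : V →ₗ[K] W, ∀ i, φ (v i) = f i := by
  obtain ⟨g, hg⟩ :=
    (Finsupp.linearCombination K v).exists_leftInverse_of_injective (LinearMap.ker_eq_bot.2 hv)
  have hgv (i : ι) : g (v i) = Finsupp.single i 1 := by
    simpa using LinearMap.congr_fun hg (Finsupp.single i 1)
  exact ⟨Finsupp.linearCombination K f ∘ₗ g, fun i => by simp [hgv]⟩

section Values

variable {C : Type} [DecidableEq C]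

theorem eConst_eq_single (c : C) : eConst c = Pi.single c 1 := by
  ext d
  simp [eConst, Pi.single_apply]

theorem linearIndependent_eConst : LinearIndependent (ZMod 2) (eConst : C → C → ZMod 2) := by
  rw [funext eConst_eq_single]
  exact Pi.linearIndependent_single_one C (ZMod 2)

/-- The values of the variables defined by a list of statements, so that
`Q.envList = evalStmts Q.stmts`. Taking a bare list makes induction on the statements possible. -/
def evalStmts (S : List (List (Term C))) : List (C → ZMod 2) :=
  S.foldl (fun env args => env ++ [(args.map (Term.eval env)).sum]) []

theorem evalStmts_concat (S : List (List (Term C))) (args : List (Term C)) :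
    evalStmts (S ++ [args]) = evalStmts S ++ [(args.map (Term.eval (evalStmts S))).sum] := by
  simp only [evalStmts, List.foldl_concat]

theorem length_evalStmts (S : List (List (Term C))) : (evalStmts S).length = S.length := by
  induction S using List.reverseRecOn with
  | nil => rfl
  | append_singleton S args ih => simp [evalStmts_concat, ih]

theorem evalStmts_prefix_append (S T : List (List (Term C))) :
    evalStmts S <+: evalStmts (S ++ T) := by
  induction T using List.reverseRecOn with
  | nil => simp
  | append_singleton T args ih =>
    rw [← List.append_assoc, evalStmts_concat]
    exact ih.trans (List.prefix_append _ _)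

theorem Term.eval_eq_of_prefix {env env' : List (C → ZMod 2)} (h : env <+: env') {t : Term C}
    (ht : ∀ j, t = Term.var j → j < env.length) : t.eval env' = t.eval env := by
  cases t with
  | const c => rfl
  | var j =>
    obtain ⟨rest, rfl⟩ := h
    exact List.getD_append _ _ _ _ (ht j rfl)

namespace MultiSLP

variable (Q : MultiSLP C)

theorem value_eq_sum {i : ℕ} (hi : i < Q.stmts.length) :
    Q.value i = ((Q.stmts.getD i []).map (Term.eval Q.envList)).sum := by
  set before := Q.stmts.take i with hbefore
  set args := Q.stmts.getD i [] with hargs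
  have hlen : (evalStmts before).length = i := by simp [length_evalStmts, hbefore, hi.le]
  have hsplit : Q.stmts = before ++ [args] ++ Q.stmts.drop (i + 1) := by
    simp [hbefore, hargs, hi]
  have hdefined : evalStmts before ++ [(args.map (Term.eval (evalStmts before))).sum]
      <+: Q.envList := by
    rw [← evalStmts_concat, show Q.envList = evalStmts Q.stmts from rfl, hsplit]
    exact evalStmts_prefix_append _ _
  have hvalue : Q.value i = (args.map (Term.eval (evalStmts before))).sum := by
    obtain ⟨rest, hrest⟩ := hdefined
    simp [value, ← hrest, hlen]
  rw [hvalue]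
  congr 1
  refine List.map_congr_left fun t ht => (Term.eval_eq_of_prefix
    ((List.prefix_append _ _).trans hdefined) fun j hj => ?_).symm
  exact hlen.symm ▸ Q.wfStmts i hi t ht j hj

theorem value_mem_result {k : ℕ} (hk : Term.var k ∈ Q.ret) : Q.value k ∈ Q.result :=
  List.mem_map_of_mem (f := Term.eval Q.envList) hk

theorem value_mem_of_forall_eval_mem {A : AddSubmonoid (C → ZMod 2)} {i : ℕ}
    (hi : i < Q.stmts.length) (h : ∀ t ∈ Q.stmts.getD i [], t.eval Q.envList ∈ A) :
    Q.value i ∈ A := by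
  rw [Q.value_eq_sum hi]
  exact A.list_sum_mem (List.forall_mem_map.2 h)

/-- The term `t` freely appears in `Q`: it is an argument of the statement of some temporal
variable. For constants this is `FreeConst`; for returned variables it underlies `FreeGoalEdge`. -/
def FreelyAppears (t : Term C) : Prop :=
  ∃ k, k < Q.stmts.length ∧ Term.var k ∉ Q.ret ∧ t ∈ Q.stmts.getD k []

variable {Q}

theorem value_mem_of_var_notMem_ret {A : AddSubmonoid (C → ZMod 2)}
    (hconst : ∀ c, FreeConst Q c → eConst c ∈ A)
    (hret : ∀ j, Term.var j ∈ Q.ret → Q.FreelyAppears (Term.var j) → Q.value j ∈ A) {k : ℕ}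
    (hk : k < Q.stmts.length) (hkret : Term.var k ∉ Q.ret) : Q.value k ∈ A := by
  induction k using Nat.strong_induction_on with
  | _ k ih =>
    refine Q.value_mem_of_forall_eval_mem hk fun t ht => ?_
    cases t with
    | const c => exact hconst c ⟨k, hk, hkret, ht⟩
    | var j =>
      have hjk : j < k := Q.wfStmts k hk _ ht j rfl
      by_cases hjret : Term.var j ∈ Q.ret
      · exact hret j hjret ⟨k, hk, hkret, ht⟩
      · exact ih j hjk (hjk.trans hk) hjret

end MultiSLP

end Values

section Graph

variable {N : Type} [DecidableEq N] {Q : MultiSLP (Const N)} {x y : Const N}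

theorem GGAdj.symm (h : GGAdj Q x y) : GGAdj Q y x :=
  ⟨h.1.symm, h.2.imp And.symm Or.symm⟩

theorem GGConn.symm (h : GGConn Q x y) : GGConn Q y x :=
  have : Std.Symm (GGAdj Q) := ⟨fun _ _ => GGAdj.symm⟩
  Relation.ReflTransGen.stdSymm.symm _ _ h

theorem GGConn.of_freeConst (hx : FreeConst Q x) (hy : FreeConst Q y) : GGConn Q x y := by
  by_cases hxy : x = y
  · exact hxy ▸ .refl
  · exact .single ⟨hxy, .inl ⟨hx, hy⟩⟩

theorem GGConn.of_freeGoalEdge (h : FreeGoalEdge Q x y) : GGConn Q x y := by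
  by_cases hxy : x = y
  · exact hxy ▸ .refl
  · exact .single ⟨hxy, .inr (.inl h)⟩

theorem InStar.ggConn (hx : InStar Q x) (hy : InStar Q y) : GGConn Q x y := by
  obtain ⟨c, hc, hcx⟩ := hx
  obtain ⟨d, hd, hdy⟩ := hy
  exact hcx.symm.trans ((GGConn.of_freeConst hc hd).trans hdy)

/-- The value `e_ρ + e_a + e_b` of the goal variable of an edge `(a, b)` not meeting `ρ`. Loops
`a = b` are allowed. -/
def IsEdgeValue (v : Const N → ZMod 2) : Prop :=
  ∃ a b : Const N, a ≠ Const.rho ∧ b ≠ Const.rho ∧ v = eConst Const.rho + eConst a + eConst b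

theorem isEdgeValue_of_mem_targetValues {L : List (N × N)} {nodes : List N} {v : Const N → ZMod 2}
    (hv : v ∈ targetValues L nodes) : IsEdgeValue v := by
  simp only [targetValues, List.mem_append, List.mem_map, List.mem_flatMap, List.mem_cons,
    List.not_mem_nil, or_false] at hv
  rcases hv with ⟨p, -, rfl⟩ | ⟨a, -, rfl | rfl⟩
  · exact ⟨Const.node p.1, Const.node p.2, nofun, nofun, rfl⟩
  · exact ⟨Const.node a, Const.lam a, nofun, nofun, rfl⟩
  · exact ⟨Const.node a, Const.mu a, nofun, nofun, rfl⟩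

theorem IsEdgeValue.apply_rho {v : Const N → ZMod 2} (h : IsEdgeValue v) : v Const.rho = 1 := by
  obtain ⟨a, b, ha, hb, rfl⟩ := h
  simp [eConst, ha.symm, hb.symm]

theorem IsEdgeValue.ne_rho (h : IsEdgeValue (eConst Const.rho + eConst x + eConst y))
    (hxy : x ≠ y) : x ≠ Const.rho := by
  rintro rfl
  simpa [eConst, hxy, CharTwo.add_self_eq_zero] using h.apply_rho

theorem ggConn_or_inStar (hQ : ∀ v ∈ Q.result, IsEdgeValue v) {i : ℕ} (hi : i < Q.stmts.length)
    (hval : Q.value i = eConst Const.rho + eConst x + eConst y)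
    (hargs : ∀ t ∈ Q.stmts.getD i [], ∃ j, t = Term.var j ∧ Term.var j ∉ Q.ret)
    (hx : x ≠ Const.rho) : GGConn Q x y ∨ InStar Q x := by
  classical
  by_contra! ⟨hxy, hstar⟩
  let f (c : Const N) : ZMod 2 := if c ≠ Const.rho ∧ GGConn Q x c then 1 else 0
  obtain ⟨φ, hφ⟩ := exists_linearMap_apply_eq_of_linearIndependent linearIndependent_eConst f
  have hφedge (a b : Const N) : φ (eConst Const.rho + eConst a + eConst b) = f a + f b := by
    simp [hφ, f]
  have hfree (c : Const N) (hc : FreeConst Q c) : φ (eConst c) = 0 := by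
    have hxc : ¬ GGConn Q x c := fun h => hstar ⟨c, hc, h.symm⟩
    simp [hφ, f, hxc]
  have hgoal (j : ℕ) (hj : Term.var j ∈ Q.ret) (hjfree : Q.FreelyAppears (Term.var j)) :
      φ (Q.value j) = 0 := by
    obtain ⟨a, b, ha, hb, hv⟩ := hQ _ (Q.value_mem_result hj)
    have hab : GGConn Q a b := .of_freeGoalEdge ⟨j, Q.wfRet _ hj j rfl, hj, hv, hjfree⟩
    have hiff : GGConn Q x a ↔ GGConn Q x b := ⟨fun h => h.trans hab, fun h => h.trans hab.symm⟩
    rw [hv, hφedge]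
    simp [f, ha, hb, hiff, CharTwo.add_self_eq_zero]
  have hzero : φ (Q.value i) = 0 := by
    refine Q.value_mem_of_forall_eval_mem (A := AddMonoidHom.mker φ) hi fun t ht => ?_
    obtain ⟨j, rfl, hj⟩ := hargs t ht
    exact MultiSLP.value_mem_of_var_notMem_ret hfree hgoal
      ((Q.wfStmts i hi _ ht j rfl).trans hi) hj
  have hone : φ (Q.value i) = 1 := by
    have hxx : GGConn Q x x := .refl
    rw [hval, hφedge]
    simp [f, hx, hxx, hxy]
  exact zero_ne_one (hzero.symm.trans hone)

theorem goal_by_two_temporals_path_general (hQ : ∀ v ∈ Q.result, IsEdgeValue v) {i : ℕ}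
    (hi : i < Q.stmts.length) (hgoal : Term.var i ∈ Q.ret)
    (hval : Q.value i = eConst Const.rho + eConst x + eConst y)
    (hargs : ∀ t ∈ Q.stmts.getD i [], ∃ j, t = Term.var j ∧ Term.var j ∉ Q.ret) :
    GGConn Q x y := by
  by_cases hxy : x = y
  · exact hxy ▸ .refl
  have hedge : IsEdgeValue (eConst Const.rho + eConst x + eConst y) :=
    hval ▸ hQ _ (Q.value_mem_result hgoal)
  have hcomm : eConst Const.rho + eConst x + eConst y = eConst Const.rho + eConst y + eConst x :=
    add_right_comm _ _ _
  rcases ggConn_or_inStar hQ hi hval hargs (hedge.ne_rho hxy) with h | hx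
  · exact h
  rcases ggConn_or_inStar hQ hi (hval.trans hcomm) hargs
    ((hcomm ▸ hedge).ne_rho (Ne.symm hxy)) with h | hy
  · exact h.symm
  exact hx.ggConn hy

end Graph

/-- **Proposition A3 of the appendix.**  Let `G` be a finite simple graph (with `L`
enumerating the edges and `nodes` enumerating the node set), let `Q` be a MultiSLP
equivalent to `P_G`, and let `𝔊` be the graph on the constants of `Q` built from the
freely appearing constants and freely appearing goal variables of `Q`.  If a goal
variable `g_{xy}` of `Q` is defined by a statement `g_{xy} ← v₁ ⊕ v₂` whose two
arguments are temporal variables, then `x ⇌ y` in `𝔊`. -/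
theorem goal_by_two_temporals_path {N : Type} [Fintype N] [DecidableEq N]
    (G : SimpleGraph N) [DecidableRel G.Adj]
    (L : List (N × N)) (nodes : List N)
    (hnodesN : nodes.Nodup) (hnodesA : ∀ a : N, a ∈ nodes)
    (hLN : (L.map fun p => s(p.1, p.2)).Nodup)
    (hLadj : ∀ p ∈ L, G.Adj p.1 p.2)
    (hLall : ∀ a b : N, G.Adj a b → s(a, b) ∈ L.map fun p => s(p.1, p.2))
    (Q : MultiSLP (Const N)) (hQ : Q.result = targetValues L nodes)
    (i : ℕ) (hi : i < Q.stmts.length) (hgoal : Term.var i ∈ Q.ret)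
    (x y : Const N)
    (hval : Q.value i = eConst Const.rho + eConst x + eConst y)
    (j₁ j₂ : ℕ) (hdef : Q.stmts.getD i [] = [Term.var j₁, Term.var j₂])
    (ht₁ : Term.var j₁ ∉ Q.ret) (ht₂ : Term.var j₂ ∉ Q.ret) :
    GGConn Q x y :=
  goal_by_two_temporals_path_general
    (fun _ hv => isEdgeValue_of_mem_targetValues (hQ ▸ hv)) hi hgoal hval
    (by rw [hdef]; simp [ht₁, ht₂])
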